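/- Fix ε ∈ (0,2), C > 0, and ϑ > 0. Then there exists T₀ such that for all T ≥ T₀ and all X with 2 ≤ X ≤ C (log T)^{2−ε}, Σ d(l₂m) d(l₁l₂n) d(l₁)/(l₁l₂mn) ≪ T^{−ϑ/5}, where the sum runs over all quadruples (l₁, l₂, m, n) of X-smooth positive integers with l₁l₂mn > T^ϑ, and d is the divisor function. -/

import Mathlib

/-!
Rankin's trick. Since `d(ab) ≤ d(a) d(b)`, the numerator is at most `d(l₁)² d(l₂)² d(m)² d(n)²`, and
`l₁l₂mn > T^ϑ` gives `1 / (l₁l₂mn) ≤ T^(-ϑ/4) (l₁l₂mn)^(-3/4)`. The tail is therefore at most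
`T^(-ϑ/4) S⁴`, where `S = ∑ d(n)² n^(-3/4)` over `X`-smooth `n`.

The sum `S` is an Euler product (`hasSum_rankinWeight`). Each local factor is
`∑ₖ (k+1)² p^(-3k/4) ≤ 1 + B p^(-3/4) ≤ exp (B / √p)` (`tsum_sq_mul_pow_le`), so bounding the sum
over primes by the sum over all integers up to `X` gives `S ≤ exp (A √X)` with
`A` an absolute constant (`exists_tsum_rankinWeight_le`). As
`X ≤ C (log T)^(2-ε)`, we have `√X = o(log T)`, whence `S⁴ ≤ T^(ϑ/20)` for large `T`; the exponents
add up to `-1/4 + 1/20 = -1/5`.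
-/

/-- `n` is `X`-smooth: every prime factor of `n` is at most `X`. -/
def IsSmooth (X : ℝ) (n : ℕ) : Prop := ∀ p : ℕ, p.Prime → p ∣ n → (p : ℝ) ≤ X

/-- The weight `d(n)² n^(-3/4)`, with value `0` at `n = 0`. -/
noncomputable def rankinWeight (n : ℕ) : ℝ := (n.divisors.card : ℝ) ^ 2 * (n : ℝ) ^ (-(3 / 4) : ℝ)

lemma rankinWeight_nonneg (n : ℕ) : 0 ≤ rankinWeight n := by
  unfold rankinWeight; positivity

lemma rankinWeight_one : rankinWeight 1 = 1 := by simp [rankinWeight]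

lemma rankinWeight_mul {m n : ℕ} (h : m.Coprime n) :
    rankinWeight (m * n) = rankinWeight m * rankinWeight n := by
  unfold rankinWeight
  rw [h.card_divisors_mul]
  push_cast
  rw [Real.mul_rpow (by positivity) (by positivity)]
  ring

lemma rankinWeight_prime_pow {p : ℕ} (hp : p.Prime) (k : ℕ) :
    rankinWeight (p ^ k) = ((k : ℝ) + 1) ^ 2 * ((p : ℝ) ^ (-(3 / 4) : ℝ)) ^ k := by
  unfold rankinWeight
  rw [Nat.divisors_prime_pow hp]
  simp only [Finset.card_map, Finset.card_range]
  push_cast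
  rw [← Real.rpow_pow_comm (by positivity)]

lemma summable_sq_mul_pow (c : ℝ) {x : ℝ} (h0 : 0 ≤ x) (h1 : x < 1) :
    Summable fun k : ℕ => ((k : ℝ) + c) ^ 2 * x ^ k := by
  have hx : ‖x‖ < 1 := by rwa [Real.norm_of_nonneg h0]
  have h2 := summable_pow_mul_geometric_of_norm_lt_one 2 hx
  have h3 := (summable_pow_mul_geometric_of_norm_lt_one 1 hx).mul_left (2 * c)
  have h4 := (summable_pow_mul_geometric_of_norm_lt_one 0 hx).mul_left (c ^ 2)
  refine ((h2.add h3).add h4).congr fun k => ?_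
  ring

/-- An upper bound for a local Euler factor that is linear in `x`, uniform for `0 ≤ x ≤ r < 1`. -/
lemma tsum_sq_mul_pow_le {x r : ℝ} (h0 : 0 ≤ x) (hxr : x ≤ r) (hr : r < 1) :
    ∑' k : ℕ, ((k : ℝ) + 1) ^ 2 * x ^ k ≤ 1 + (∑' k : ℕ, ((k : ℝ) + 2) ^ 2 * r ^ k) * x := by
  rw [(summable_sq_mul_pow 1 h0 (hxr.trans_lt hr)).tsum_eq_zero_add]
  have h : ∑' k : ℕ, (((k + 1 : ℕ) : ℝ) + 1) ^ 2 * x ^ (k + 1)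
      = (∑' k : ℕ, ((k : ℝ) + 2) ^ 2 * x ^ k) * x := by
    rw [← tsum_mul_right]
    refine tsum_congr fun k => ?_
    push_cast
    ring
  rw [h]
  have h' : ∑' k : ℕ, ((k : ℝ) + 2) ^ 2 * x ^ k ≤ ∑' k : ℕ, ((k : ℝ) + 2) ^ 2 * r ^ k :=
    (summable_sq_mul_pow 2 h0 (hxr.trans_lt hr)).tsum_le_tsum (fun k => by gcongr)
      (summable_sq_mul_pow 2 (h0.trans hxr) hr)
  have := mul_le_mul_of_nonneg_right h' h0
  simp only [Nat.cast_zero, pow_zero]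
  linarith

lemma sum_inv_sqrt_le (N : ℕ) : ∑ n ∈ Finset.range (N + 1), 1 / √(n : ℝ) ≤ 2 * √(N : ℝ) := by
  induction N with
  | zero => simp
  | succ k ih =>
    rw [Finset.sum_range_succ]
    have hb : 0 < √((k + 1 : ℕ) : ℝ) := Real.sqrt_pos.2 (by positivity)
    have ha : 0 ≤ √(k : ℝ) := Real.sqrt_nonneg _
    have h1 := Real.sq_sqrt (show (0 : ℝ) ≤ k by positivity)
    have h2 := Real.sq_sqrt (show (0 : ℝ) ≤ ((k + 1 : ℕ) : ℝ) by positivity)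
    push_cast at h2 hb ih ⊢
    have h3 : 1 / √((k : ℝ) + 1) ≤ 2 * √((k : ℝ) + 1) - 2 * √(k : ℝ) := by
      rw [div_le_iff₀ hb]
      nlinarith [sq_nonneg (√((k : ℝ) + 1) - √(k : ℝ))]
    linarith

/-- Convergence of the sum of the weights over smooth numbers, and its Euler product. -/
lemma hasSum_rankinWeight (N : ℕ) :
    HasSum (fun m : N.smoothNumbers => rankinWeight m)
      (∏ p ∈ N.primesBelow, ∑' k : ℕ, ((k : ℝ) + 1) ^ 2 * ((p : ℝ) ^ (-(3 / 4) : ℝ)) ^ k) := by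
  have hloc : ∀ {p : ℕ}, p.Prime → Summable fun k : ℕ => ‖rankinWeight (p ^ k)‖ := by
    intro p hp
    have hx : (p : ℝ) ^ (-(3 / 4) : ℝ) < 1 :=
      Real.rpow_lt_one_of_one_lt_of_neg (by exact_mod_cast hp.one_lt) (by norm_num)
    refine (summable_sq_mul_pow 1 (by positivity) hx).congr fun k => ?_
    rw [Real.norm_of_nonneg (rankinWeight_nonneg _), rankinWeight_prime_pow hp]
  have h := (EulerProduct.summable_and_hasSum_smoothNumbers_prod_primesBelow_tsum
    rankinWeight_one rankinWeight_mul hloc N).2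
  have heq : ∏ p ∈ N.primesBelow, ∑' k : ℕ, ((k : ℝ) + 1) ^ 2 * ((p : ℝ) ^ (-(3 / 4) : ℝ)) ^ k
      = ∏ p ∈ N.primesBelow, ∑' k : ℕ, rankinWeight (p ^ k) :=
    Finset.prod_congr rfl fun p hp => tsum_congr fun k =>
      (rankinWeight_prime_pow (Nat.prime_of_mem_primesBelow hp) k).symm
  rw [heq]
  exact h

lemma exists_tsum_rankinWeight_le : ∃ A : ℝ, 0 < A ∧ ∀ N : ℕ,
    ∑' m : (N + 1).smoothNumbers, rankinWeight m ≤ Real.exp (A * √(N : ℝ)) := by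
  set r : ℝ := (2 : ℝ) ^ (-(3 / 4) : ℝ) with hr
  have hr0 : 0 ≤ r := by positivity
  have hr1 : r < 1 := Real.rpow_lt_one_of_one_lt_of_neg (by norm_num) (by norm_num)
  set B : ℝ := ∑' k : ℕ, ((k : ℝ) + 2) ^ 2 * r ^ k with hB
  have hB0 : 0 ≤ B := tsum_nonneg fun k => by positivity
  refine ⟨2 * B + 1, by positivity, fun N => ?_⟩
  rw [(hasSum_rankinWeight (N + 1)).tsum_eq]
  calc _ ≤ ∏ p ∈ (N + 1).primesBelow, Real.exp (B * (1 / √(p : ℝ))) := by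
        refine Finset.prod_le_prod (fun p _ => tsum_nonneg fun k => by positivity) fun p hp => ?_
        have hp' := Nat.prime_of_mem_primesBelow hp
        have hp2 : (2 : ℝ) ≤ p := by exact_mod_cast hp'.two_le
        have hxr : (p : ℝ) ^ (-(3 / 4) : ℝ) ≤ r :=
          Real.rpow_le_rpow_of_nonpos (by norm_num) hp2 (by norm_num)
        have hle : (p : ℝ) ^ (-(3 / 4) : ℝ) ≤ 1 / √(p : ℝ) := by
          rw [Real.sqrt_eq_rpow, one_div ((p : ℝ) ^ _), ← Real.rpow_neg (by positivity)]
          exact Real.rpow_le_rpow_of_exponent_le (by linarith) (by norm_num)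
        have h1 := tsum_sq_mul_pow_le (by positivity) hxr hr1
        have h2 := mul_le_mul_of_nonneg_left hle hB0
        have h3 := Real.add_one_le_exp (B * (1 / √(p : ℝ)))
        linarith
    _ = Real.exp (B * ∑ p ∈ (N + 1).primesBelow, 1 / √(p : ℝ)) := by
        rw [Finset.mul_sum, Real.exp_sum]
    _ ≤ _ := by
        have h1 : ∑ p ∈ (N + 1).primesBelow, 1 / √(p : ℝ)
            ≤ ∑ p ∈ Finset.range (N + 1), 1 / √(p : ℝ) :=
          Finset.sum_le_sum_of_subset_of_nonneg (Finset.filter_subset _ _)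
            (fun _ _ _ => by positivity)
        have h2 := mul_le_mul_of_nonneg_left (h1.trans (sum_inv_sqrt_le N)) hB0
        have h3 : 0 ≤ √(N : ℝ) := Real.sqrt_nonneg _
        exact Real.exp_le_exp.2 (by linarith)

lemma card_divisors_mul_le (a b : ℕ) :
    ((a * b).divisors.card : ℝ) ≤ a.divisors.card * b.divisors.card := by
  rw [Nat.divisors_mul]
  exact_mod_cast Finset.card_mul_le

/-- Rankin's inequality for a single summand. -/
lemma rankin_term_le {Y : ℝ} (hY : 0 < Y) {a b c d : ℕ}
    (h : Y < ((a * b * c * d : ℕ) : ℝ)) :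
    ((b * c).divisors.card : ℝ) * ((a * b * d).divisors.card : ℝ) * (a.divisors.card : ℝ) /
        ((a * b * c * d : ℕ) : ℝ)
      ≤ Y ^ (-(1 / 4) : ℝ) *
        (rankinWeight a * (rankinWeight b * (rankinWeight c * rankinWeight d))) := by
  set P : ℝ := ((a * b * c * d : ℕ) : ℝ) with hP
  have hP0 : 0 < P := hY.trans h
  have hinv : P⁻¹ ≤ Y ^ (-(1 / 4) : ℝ) * P ^ (-(3 / 4) : ℝ) := by
    have h1 : P⁻¹ = P ^ (-(1 / 4) : ℝ) * P ^ (-(3 / 4) : ℝ) := by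
      rw [← Real.rpow_add hP0, ← Real.rpow_neg_one]; norm_num
    rw [h1]
    exact mul_le_mul_of_nonneg_right
      (Real.rpow_le_rpow_of_nonpos hY h.le (by norm_num)) (by positivity)
  have hne : a * b * c * d ≠ 0 := by
    intro h0; rw [hP, h0] at hP0; simp at hP0
  have one_le : ∀ n : ℕ, n ≠ 0 → (1 : ℝ) ≤ n.divisors.card := fun n hn => by
    exact_mod_cast Finset.card_pos.2 ⟨1, by simpa using hn⟩
  have hc := one_le c (by rintro rfl; simp at hne)
  have hd := one_le d (by rintro rfl; simp at hne)
  have hnum : ((b * c).divisors.card : ℝ) * ((a * b * d).divisors.card : ℝ) * (a.divisors.card : ℝ)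
      ≤ (a.divisors.card : ℝ) ^ 2 * (b.divisors.card : ℝ) ^ 2 * (c.divisors.card : ℝ) ^ 2
        * (d.divisors.card : ℝ) ^ 2 := by
    have h1 := card_divisors_mul_le b c
    have h2 : ((a * b * d).divisors.card : ℝ)
        ≤ a.divisors.card * b.divisors.card * d.divisors.card :=
      (card_divisors_mul_le (a * b) d).trans
        (mul_le_mul_of_nonneg_right (card_divisors_mul_le a b) (by positivity))
    calc _ ≤ ((b.divisors.card : ℝ) * c.divisors.card) *
          (a.divisors.card * b.divisors.card * d.divisors.card) * a.divisors.card := by gcongr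
      _ = (a.divisors.card : ℝ) ^ 2 * (b.divisors.card : ℝ) ^ 2 * (c.divisors.card : ℝ)
        * (d.divisors.card : ℝ) := by ring
      _ ≤ _ := by
        gcongr
        · exact le_self_pow₀ hc (by norm_num)
        · exact le_self_pow₀ hd (by norm_num)
  rw [div_eq_mul_inv]
  calc _ ≤ _ := mul_le_mul hnum hinv (by positivity) (by positivity)
    _ = _ := by
      unfold rankinWeight
      rw [hP]
      push_cast
      rw [Real.mul_rpow (by positivity) (by positivity),
        Real.mul_rpow (by positivity) (by positivity),
        Real.mul_rpow (by positivity) (by positivity)]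
      ring

lemma tsum_le_of_injective {ι κ : Type*} {F : ι → ℝ} {G : κ → ℝ} {B : ℝ} (e : ι → κ)
    (he : Function.Injective e) (hF : ∀ i, 0 ≤ F i) (hG : ∀ k, 0 ≤ G k)
    (hle : ∀ i, F i ≤ G (e i)) (hB : HasSum G B) : ∑' i, F i ≤ B := by
  rw [← hB.tsum_eq]
  exact Summable.tsum_le_tsum_of_inj e he (fun k _ => hG k) hle
    (Summable.of_nonneg_of_le hF hle (hB.summable.comp_injective he)) hB.summable

lemma mem_smoothNumbers_of_isSmooth {X : ℝ} {n N : ℕ} (hN : N = ⌊X⌋₊)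
    (h : IsSmooth X n) : n ∈ (N + 1).smoothNumbers :=
  hN ▸ Nat.mem_smoothNumbers'.2 fun p hp hpn => Nat.lt_succ_of_le (Nat.le_floor (h p hp hpn))

lemma hasSum_mul_pair {ι κ : Type*} {w : ι → ℝ} {v : κ → ℝ} {S R : ℝ} (hw : ∀ i, 0 ≤ w i)
    (hv : ∀ i, 0 ≤ v i) (hS : HasSum w S) (hR : HasSum v R) :
    HasSum (fun q : ι × κ => w q.1 * v q.2) (S * R) := by
  have h : Summable (fun q : ι × κ => w q.1 * v q.2) :=
    Summable.mul_of_nonneg hS.summable hR.summable hw hv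
  exact HasSum.mul hS hR h

lemma hasSum_mul_four {ι : Type*} {w : ι → ℝ} {S : ℝ} (hw : ∀ i, 0 ≤ w i) (hS : HasSum w S) :
    HasSum (fun q : ι × ι × ι × ι => w q.1 * (w q.2.1 * (w q.2.2.1 * w q.2.2.2)))
      (S * (S * (S * S))) := by
  have hw2 : HasSum (fun q : ι × ι => w q.1 * w q.2) (S * S) :=
    hasSum_mul_pair (w := w) (v := w) hw hw hS hS
  have hw2' : ∀ q : ι × ι, 0 ≤ w q.1 * w q.2 := fun q => mul_nonneg (hw q.1) (hw q.2)
  have hw3 : HasSum (fun q : ι × ι × ι => w q.1 * (w q.2.1 * w q.2.2)) (S * (S * S)) :=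
    hasSum_mul_pair (w := w) (v := fun q : ι × ι => w q.1 * w q.2) hw hw2' hS hw2
  have hw3' : ∀ q : ι × ι × ι, 0 ≤ w q.1 * (w q.2.1 * w q.2.2) :=
    fun q => mul_nonneg (hw q.1) (hw2' q.2)
  exact hasSum_mul_pair (w := w) (v := fun q : ι × ι × ι => w q.1 * (w q.2.1 * w q.2.2))
    hw hw3' hS hw3

theorem rankin_trick_tail_bound
    (ε C ϑ : ℝ) (hε : 0 < ε) (hε2 : ε < 2) (hC : 0 < C) (hϑ : 0 < ϑ) :
    ∃ K T₀ : ℝ, ∀ T : ℝ, T₀ ≤ T → ∀ X : ℝ, 2 ≤ X → X ≤ C * Real.log T ^ (2 - ε) →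
      (∑' q : {q : ℕ × ℕ × ℕ × ℕ //
          IsSmooth X q.1 ∧ IsSmooth X q.2.1 ∧ IsSmooth X q.2.2.1 ∧ IsSmooth X q.2.2.2 ∧
            (T ^ ϑ : ℝ) < ((q.1 * q.2.1 * q.2.2.1 * q.2.2.2 : ℕ) : ℝ)},
        (((q : ℕ × ℕ × ℕ × ℕ).2.1 * (q : ℕ × ℕ × ℕ × ℕ).2.2.1).divisors.card : ℝ) *
          ((((q : ℕ × ℕ × ℕ × ℕ).1 * (q : ℕ × ℕ × ℕ × ℕ).2.1 *
              (q : ℕ × ℕ × ℕ × ℕ).2.2.2).divisors.card : ℝ)) *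
          (((q : ℕ × ℕ × ℕ × ℕ).1.divisors.card : ℝ)) /
          (((q : ℕ × ℕ × ℕ × ℕ).1 * (q : ℕ × ℕ × ℕ × ℕ).2.1 *
            (q : ℕ × ℕ × ℕ × ℕ).2.2.1 * (q : ℕ × ℕ × ℕ × ℕ).2.2.2 : ℕ) : ℝ))
        ≤ K * T ^ (-ϑ / 5) := by
  obtain ⟨A, hA, hsum⟩ := exists_tsum_rankinWeight_le
  -- `c` is chosen so that `√X ≤ c log T` makes the fourth power of the smooth sum `≤ T^(ϑ/20)`.
  set c : ℝ := ϑ / (80 * A) with hc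
  have hc0 : 0 < c := by positivity
  have hev : ∀ᶠ T : ℝ in Filter.atTop,
      C / c ^ 2 ≤ Real.log T ^ ε ∧ 0 < Real.log T ∧ 0 < T :=
    (((tendsto_rpow_atTop hε).comp Real.tendsto_log_atTop).eventually_ge_atTop _).and
      ((Real.tendsto_log_atTop.eventually_gt_atTop 0).and (Filter.eventually_gt_atTop 0))
  obtain ⟨T₀, hT₀⟩ := Filter.eventually_atTop.1 hev
  refine ⟨1, T₀, fun T hT X hX2 hX => ?_⟩
  obtain ⟨h1, hlog, hT0⟩ := hT₀ T hT
  have hsqrt : √X ≤ c * Real.log T := by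
    refine Real.sqrt_le_iff.2 ⟨by positivity, hX.trans ?_⟩
    have h2 : C ≤ c ^ 2 * Real.log T ^ ε := by
      rwa [div_le_iff₀ (by positivity), mul_comm] at h1
    calc C * Real.log T ^ (2 - ε)
        ≤ (c ^ 2 * Real.log T ^ ε) * Real.log T ^ (2 - ε) := by gcongr
      _ = (c * Real.log T) ^ 2 := by
        rw [mul_assoc, ← Real.rpow_add hlog, add_sub_cancel, Real.rpow_two, mul_pow]
  obtain ⟨N, hN⟩ : ∃ N, N = ⌊X⌋₊ := ⟨_, rfl⟩
  obtain ⟨S, hS⟩ : ∃ S, HasSum (fun m : (N + 1).smoothNumbers => rankinWeight m) S :=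
    ⟨_, hasSum_rankinWeight (N + 1)⟩
  have hw0 : ∀ m : (N + 1).smoothNumbers, 0 ≤ rankinWeight m := fun m => rankinWeight_nonneg m
  have hS0 : 0 ≤ S := hS.nonneg hw0
  have hSN : S ≤ Real.exp (A * √(N : ℝ)) := hS.tsum_eq ▸ hsum N
  have hw4 := (hasSum_mul_four hw0 hS).mul_left ((T ^ ϑ) ^ (-(1 / 4) : ℝ))
  have hY : 0 < T ^ ϑ := by positivity
  have hSle : S ^ 4 ≤ T ^ (ϑ / 20) := by
    have h2 : √(N : ℝ) ≤ √X := Real.sqrt_le_sqrt (hN ▸ Nat.floor_le (by linarith))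
    have h3 : A * √(N : ℝ) ≤ ϑ / 80 * Real.log T := by
      calc _ ≤ A * (c * Real.log T) := by gcongr; exact h2.trans hsqrt
        _ = _ := by rw [hc]; field_simp
    calc S ^ 4 ≤ Real.exp (ϑ / 80 * Real.log T) ^ 4 := by
          gcongr
          exact hSN.trans (Real.exp_le_exp.2 h3)
      _ = T ^ (ϑ / 20) := by
          rw [← Real.exp_nat_mul, Real.rpow_def_of_pos hT0]
          congr 1; push_cast; ring
  have hbound : (T ^ ϑ) ^ (-(1 / 4) : ℝ) * (S * (S * (S * S))) ≤ 1 * T ^ (-ϑ / 5) := by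
    calc _ = T ^ (-(ϑ / 4)) * S ^ 4 := by
          rw [← Real.rpow_mul hT0.le]
          ring_nf
      _ ≤ T ^ (-(ϑ / 4)) * T ^ (ϑ / 20) := by gcongr
      _ = _ := by rw [← Real.rpow_add hT0, one_mul]; congr 1; ring
  refine le_trans ?_ hbound
  set e : {q : ℕ × ℕ × ℕ × ℕ //
      IsSmooth X q.1 ∧ IsSmooth X q.2.1 ∧ IsSmooth X q.2.2.1 ∧ IsSmooth X q.2.2.2 ∧
        (T ^ ϑ : ℝ) < ((q.1 * q.2.1 * q.2.2.1 * q.2.2.2 : ℕ) : ℝ)} →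
      (N + 1).smoothNumbers × (N + 1).smoothNumbers × (N + 1).smoothNumbers ×
        (N + 1).smoothNumbers :=
    fun q => (⟨_, mem_smoothNumbers_of_isSmooth hN q.2.1⟩, ⟨_, mem_smoothNumbers_of_isSmooth hN q.2.2.1⟩,
      ⟨_, mem_smoothNumbers_of_isSmooth hN q.2.2.2.1⟩, ⟨_, mem_smoothNumbers_of_isSmooth hN q.2.2.2.2.1⟩) with he
  have hinj : Function.Injective e := by
    rintro ⟨⟨a, b, c, d⟩, h⟩ ⟨⟨a', b', c', d'⟩, h'⟩ heq
    simpa [he] using heq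
  refine tsum_le_of_injective e hinj (fun q => by positivity) (fun q => ?_) (fun q => ?_) hw4
  · have := hw0 q.1; have := hw0 q.2.1; have := hw0 q.2.2.1; have := hw0 q.2.2.2
    positivity
  · exact rankin_term_le hY (a := q.1.1) (b := q.1.2.1) (c := q.1.2.2.1) (d := q.1.2.2.2)
      q.2.2.2.2.2
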